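/- arXiv:2412.07337 — 12 statements merged into one kernel-verified Lean document; each statement's English description precedes it below -/
import Mathlib

section
/- For every natural number n ≥ 3 and every d : Fin n → ℕ with 2 ≤ d i for all i and 8 < ∏ i, d i (total Hilbert-space dimension exceeding 8), there exists a state v : (∀ i : Fin n, Fin (d i)) → ℂ which is nonzero and not completely product, such that for every completely product state p : (∀ i : Fin n, Fin (d i)) → ℂ and all nonzero complex numbers a, b, the state a • v + b • p is not completely product. -/
/-- An `n`-partite state is completely product if its coefficient tensor factorizes. -/
def CompletelyProduct {n : ℕ} {d : Fin n → ℕ}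
    (v : (∀ i : Fin n, Fin (d i)) → ℂ) : Prop :=
  ∃ f : ∀ i : Fin n, Fin (d i) → ℂ, ∀ x, v x = ∏ i, f i (x i)

/-- The three-qubit W tensor is not a sum of two product tensors. -/
theorem w_rank_aux (a b c p q r : ℕ → ℂ)
    (h : ∀ i j k : ℕ, i ≤ 1 → j ≤ 1 → k ≤ 1 →
      a i * b j * c k + p i * q j * r k = if i + j + k = 1 then 1 else 0) : False := by
  have e000 := h 0 0 0 (by simp) (by simp) (by simp)
  have e001 := h 0 0 1 (by simp) (by simp) (by simp)
  have e010 := h 0 1 0 (by simp) (by simp) (by simp)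
  have e011 := h 0 1 1 (by simp) (by simp) (by simp)
  have e100 := h 1 0 0 (by simp) (by simp) (by simp)
  have e101 := h 1 0 1 (by simp) (by simp) (by simp)
  have e110 := h 1 1 0 (by simp) (by simp) (by simp)
  have e111 := h 1 1 1 (by simp) (by simp) (by simp)
  norm_num at e000 e001 e010 e011 e100 e101 e110 e111
  obtain ⟨D, hD⟩ : ∃ D, D = (a 0 * p 1 - a 1 * p 0) * (b 0 * q 1 - b 1 * q 0) := ⟨_, rfl⟩
  have h0 : c 0 * r 0 * D = -1 := by
    have : c 0 * r 0 * D =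
        (a 0 * b 0 * c 0 + p 0 * q 0 * r 0) * (a 1 * b 1 * c 0 + p 1 * q 1 * r 0)
        - (a 0 * b 1 * c 0 + p 0 * q 1 * r 0) * (a 1 * b 0 * c 0 + p 1 * q 0 * r 0) := by
      rw [hD]; ring
    rw [this, e000, e110, e010, e100]; norm_num
  have h1 : c 1 * r 1 * D = 0 := by
    have : c 1 * r 1 * D =
        (a 0 * b 0 * c 1 + p 0 * q 0 * r 1) * (a 1 * b 1 * c 1 + p 1 * q 1 * r 1)
        - (a 0 * b 1 * c 1 + p 0 * q 1 * r 1) * (a 1 * b 0 * c 1 + p 1 * q 0 * r 1) := by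
      rw [hD]; ring
    rw [this, e001, e111, e011, e101]; norm_num
  have h2 : (c 0 * r 1 + c 1 * r 0) * D = 0 := by
    have : (c 0 * r 1 + c 1 * r 0) * D =
        (a 0 * b 0 * c 0 + p 0 * q 0 * r 0) * (a 1 * b 1 * c 1 + p 1 * q 1 * r 1)
        + (a 0 * b 0 * c 1 + p 0 * q 0 * r 1) * (a 1 * b 1 * c 0 + p 1 * q 1 * r 0)
        - (a 0 * b 1 * c 0 + p 0 * q 1 * r 0) * (a 1 * b 0 * c 1 + p 1 * q 0 * r 1)
        - (a 0 * b 1 * c 1 + p 0 * q 1 * r 1) * (a 1 * b 0 * c 0 + p 1 * q 0 * r 0) := by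
      rw [hD]; ring
    rw [this, e000, e111, e001, e110, e010, e101, e011, e100]; norm_num
  have hDne : D ≠ 0 := by rintro rfl; simp at h0
  have hc : c 0 ≠ 0 := by intro hc; simp [hc] at h0
  have hr : r 0 ≠ 0 := by intro hr; simp [hr] at h0
  have h2' : c 0 * r 1 + c 1 * r 0 = 0 := by simpa [hDne] using h2
  have h1' : c 1 = 0 ∨ r 1 = 0 := by simpa [hDne] using h1
  rcases h1' with hz | hz
  · have : r 1 = 0 := by simpa [hz, hc] using h2'
    simp [hz, this] at e001
  · have : c 1 = 0 := by simpa [hz, hr] using h2'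
    simp [hz, this] at e001

/-- The generalized W tensor is not a combination of two product tensors. -/
theorem w_ne_aux (m : ℕ) (d : Fin (m + 3) → ℕ) (hd : ∀ i, 2 ≤ d i)
    (f g : ∀ i, Fin (d i) → ℂ) (s t : ℂ)
    (h : ∀ x : ∀ i, Fin (d i), (if ∑ i, (x i : ℕ) = 1 then (1 : ℂ) else 0)
      = s * ∏ i, f i (x i) + t * ∏ i, g i (x i)) : False := by
  have hm : ∀ k l, min k 1 < d l := fun k l => by have := hd l; omega
  let X : ℕ → ∀ l, Fin (d l) := fun k l => ⟨min k 1, hm k l⟩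
  refine w_rank_aux (fun i => f 0 (X i 0)) (fun i => f 1 (X i 1))
    (fun i => s * f 2 (X i 2) * ∏ l : Fin m, f l.succ.succ.succ (X 0 _))
    (fun i => g 0 (X i 0)) (fun i => g 1 (X i 1))
    (fun i => t * g 2 (X i 2) * ∏ l : Fin m, g l.succ.succ.succ (X 0 _)) ?_
  intro i j k hi hj hk
  let Y : ∀ l, Fin (d l) :=
    Fin.cons (X i 0) (Fin.cons (X j 1) (Fin.cons (X k 2) fun l : Fin m => X 0 l.succ.succ.succ))
  have h0 : Y 0 = X i 0 := rfl
  have h1 : Y (Fin.succ 0) = X j 1 := rfl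
  have h2 : Y (Fin.succ (Fin.succ 0)) = X k 2 := rfl
  have h3 : ∀ l : Fin m, Y l.succ.succ.succ = X 0 l.succ.succ.succ := fun l => rfl
  have hP : ∀ f : ∀ i, Fin (d i) → ℂ, ∏ l, f l (Y l) =
      f 0 (X i 0) * (f 1 (X j 1) * (f 2 (X k 2) *
        ∏ l : Fin m, f l.succ.succ.succ (X 0 l.succ.succ.succ))) := by
    intro f
    rw [Fin.prod_univ_succ, Fin.prod_univ_succ, Fin.prod_univ_succ]
    rfl
  have hS : ∑ l, (Y l : ℕ) = i + j + k := by
    rw [Fin.sum_univ_succ, Fin.sum_univ_succ, Fin.sum_univ_succ]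
    simp only [h3, h0, h1, h2, X]
    simp
    omega
  have := h Y
  rw [hP, hP, hS] at this
  rw [this]
  ring

/-- For every multipartite system of at least 3 parties with total dimension exceeding 8,
there exists an entangled state whose nontrivial superposition with an arbitrary
completely product state is never completely product. -/
theorem exists_unconditionally_robust_of_dim_gt_eight
    (n : ℕ) (hn : 3 ≤ n) (d : Fin n → ℕ) (hd : ∀ i, 2 ≤ d i)
    (hdim : 8 < ∏ i, d i) :
    ∃ v : (∀ i : Fin n, Fin (d i)) → ℂ,
      v ≠ 0 ∧ ¬ CompletelyProduct v ∧
      ∀ p : (∀ i : Fin n, Fin (d i)) → ℂ, CompletelyProduct p →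
        ∀ a b : ℂ, a ≠ 0 → b ≠ 0 → ¬ CompletelyProduct (a • v + b • p) := by
  obtain ⟨m, rfl⟩ : ∃ m, n = m + 3 := ⟨n - 3, by omega⟩
  have key := w_ne_aux m d hd
  refine ⟨fun x => if ∑ i, (x i : ℕ) = 1 then (1 : ℂ) else 0, ?_, ?_, ?_⟩
  · intro h
    exact key (fun _ _ => 0) (fun _ _ => 0) 0 0 fun x => by simpa using congrFun h x
  · rintro ⟨f, hf⟩
    exact key f f 1 0 fun x => by simpa using hf x
  · rintro p ⟨g, hg⟩ a b ha hb ⟨f, hf⟩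
    refine key f g a⁻¹ (-(a⁻¹ * b)) fun x => ?_
    have := hf x
    simp only [Pi.add_apply, Pi.smul_apply, smul_eq_mul] at this
    rw [← this, ← hg x, mul_add, inv_mul_cancel_left₀ ha]
    ring
end

section
/- There exist unit vectors α, α' : Fin 2 → ℂ with ⟨α, α'⟩ = 0, a two-qubit entangled state Φ, a two-qubit product state Φ' with ⟨Φ, Φ'⟩ = 0, nonzero real numbers c, d with c² + d² = 1, a completely product three-qubit state p, and nonzero complex numbers a, b, such that the superposed state a • (c • (α ⊗ Φ) + d • (α' ⊗ Φ')) + b • p is completely product. (Thus the mere Schmidt form with Φ entangled and Φ' product does not guarantee inseparability of the superposition.) -/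
/-- Tensor product of two single-qubit vectors, as a two-qubit coefficient matrix. -/
def tq (x y : Fin 2 → ℂ) : Fin 2 → Fin 2 → ℂ := fun j k => x j * y k

/-- Tensor product of a single-qubit vector with a two-qubit state, giving a
three-qubit coefficient tensor. -/
def tqq (α : Fin 2 → ℂ) (w : Fin 2 → Fin 2 → ℂ) : Fin 2 → Fin 2 → Fin 2 → ℂ :=
  fun i j k => α i * w j k

/-- A two-qubit state is a product state if its coefficient matrix factorizes. -/
def ProdState (w : Fin 2 → Fin 2 → ℂ) : Prop :=
  ∃ f g : Fin 2 → ℂ, ∀ j k, w j k = f j * g k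

/-- A two-qubit state is entangled if it is nonzero and not a product state. -/
def Entangled2 (w : Fin 2 → Fin 2 → ℂ) : Prop := w ≠ 0 ∧ ¬ ProdState w

/-- A three-qubit state is completely product if its coefficient tensor factorizes. -/
def CompProd3 (v : Fin 2 → Fin 2 → Fin 2 → ℂ) : Prop :=
  ∃ f g h : Fin 2 → ℂ, ∀ i j k, v i j k = f i * g j * h k

/-- Hermitian inner product on single-qubit vectors. -/
noncomputable def ip1 (u v : Fin 2 → ℂ) : ℂ := ∑ i, (starRingEnd ℂ) (u i) * v i

/-- Hermitian inner product on two-qubit states. -/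
noncomputable def ip2 (u v : Fin 2 → Fin 2 → ℂ) : ℂ := ∑ j, ∑ k, (starRingEnd ℂ) (u j k) * v j k

/-- Hermitian inner product on three-qubit states. -/
noncomputable def ip3 (u v : Fin 2 → Fin 2 → Fin 2 → ℂ) : ℂ :=
  ∑ i, ∑ j, ∑ k, (starRingEnd ℂ) (u i j k) * v i j k

/-- There exist a Schmidt-form three-qubit entangled state (with `Φ` entangled and
`Φ'` product) and a completely product state whose nontrivial superposition is
completely product. -/
theorem exists_superposition_completely_product :
    ∃ (α α' : Fin 2 → ℂ) (Φ Φ' : Fin 2 → Fin 2 → ℂ) (c d : ℝ)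
      (p : Fin 2 → Fin 2 → Fin 2 → ℂ) (a b : ℂ),
      ip1 α α = 1 ∧ ip1 α' α' = 1 ∧ ip1 α α' = 0 ∧
      Entangled2 Φ ∧ ProdState Φ' ∧ ip2 Φ Φ' = 0 ∧
      c ≠ 0 ∧ d ≠ 0 ∧ c ^ 2 + d ^ 2 = 1 ∧
      CompProd3 p ∧ a ≠ 0 ∧ b ≠ 0 ∧
      CompProd3 (a • ((c : ℂ) • tqq α Φ + (d : ℂ) • tqq α' Φ') + b • p) := by
  refine ⟨![1, 0], ![0, 1], ![![0, 1], ![1, 1]], ![![1, 0], ![0, 0]], 3 / 5, 4 / 5,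
    fun i _ _ => ![-(3 / 5), 0] i, 1, 1, ?_, ?_, ?_, ⟨?_, ?_⟩, ?_, ?_, ?_, ?_, ?_, ?_, ?_, ?_, ?_⟩
  · simp [ip1]
  · simp [ip1]
  · simp [ip1]
  · intro h
    have := congrFun (congrFun h 0) 1
    simp at this
  · rintro ⟨f, g, h⟩
    have h00 := h 0 0
    have h01 := h 0 1
    have h10 := h 1 0
    simp at h00 h01 h10
    rcases h00 with h0 | h0
    · simp [h0] at h01
    · simp [h0] at h10
  · refine ⟨![1, 0], ![1, 0], ?_⟩
    intro j k
    fin_cases j <;> fin_cases k <;> simp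
  · simp [ip2]
  · norm_num
  · norm_num
  · norm_num
  · exact ⟨![-(3 / 5), 0], fun _ => 1, fun _ => 1, fun i j k => by simp⟩
  · exact one_ne_zero
  · exact one_ne_zero
  · refine ⟨![-(3 / 5), 4 / 5], ![1, 0], ![1, 0], ?_⟩
    intro i j k
    fin_cases i <;> fin_cases j <;> fin_cases k <;> simp [tqq]
end

section
/- Let α, α' : Fin 2 → ℂ be orthonormal, let (u₀, u₁) and (w₀, w₁) be orthonormal bases of ℂ², let s, t be nonzero real numbers with s² + t² = 1, and set Φ = s • (u₀ ⊗ w₀) + t • (u₁ ⊗ w₁). Let Φ' be a nonzero two-qubit product state with ⟨u₀ ⊗ w₀, Φ'⟩ = 0 and ⟨u₁ ⊗ w₁, Φ'⟩ = 0. Let c, d be nonzero real numbers with c² + d² = 1 and set Ψ = c • (α ⊗ Φ) + d • (α' ⊗ Φ'). Then for every completely product three-qubit state p and all nonzero complex numbers a, b, the state a • Ψ + b • p is not completely product (hence it is entangled in at least one bipartition). -/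
/-- In dimension two, an orthonormal pair is determined by its determinant up to conjugation. -/
lemma onb_det (u v : Fin 2 → ℂ) (h0 : ip1 u u = 1) (h1 : ip1 v v = 1) (h : ip1 u v = 0) :
    ∃ D : ℂ, D ≠ 0 ∧ D = u 0 * v 1 - u 1 * v 0 ∧
      u 0 = D * (starRingEnd ℂ) (v 1) ∧ u 1 = -D * (starRingEnd ℂ) (v 0) ∧
      v 0 = -D * (starRingEnd ℂ) (u 1) ∧ v 1 = D * (starRingEnd ℂ) (u 0) := by
  have h' : (starRingEnd ℂ) (ip1 u v) = 0 := by rw [h]; simp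
  simp only [ip1, Fin.sum_univ_two, map_add, map_mul, Complex.conj_conj] at h0 h1 h h'
  have e1 : u 0 = (u 0 * v 1 - u 1 * v 0) * (starRingEnd ℂ) (v 1) := by
    linear_combination (-u 0) * h1 + v 0 * h'
  have e2 : u 1 = -(u 0 * v 1 - u 1 * v 0) * (starRingEnd ℂ) (v 0) := by
    linear_combination (-u 1) * h1 + v 1 * h'
  have e3 : v 0 = -(u 0 * v 1 - u 1 * v 0) * (starRingEnd ℂ) (u 1) := by
    linear_combination (-v 0) * h0 + u 0 * h
  have e4 : v 1 = (u 0 * v 1 - u 1 * v 0) * (starRingEnd ℂ) (u 0) := by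
    linear_combination (-v 1) * h0 + u 1 * h
  refine ⟨_, ?_, rfl, e1, e2, e3, e4⟩
  intro hD
  rw [hD] at e1 e2
  simp at e1 e2
  simp [e1, e2] at h0

/-- The polarised determinant against a product `x ⊗ y` is an inner product. -/
lemma polar_zero (x y x' y' : Fin 2 → ℂ) (D E : ℂ) (M : Fin 2 → Fin 2 → ℂ)
    (hx0 : x 0 = D * (starRingEnd ℂ) (x' 1)) (hx1 : x 1 = -D * (starRingEnd ℂ) (x' 0))
    (hy0 : y 0 = E * (starRingEnd ℂ) (y' 1)) (hy1 : y 1 = -E * (starRingEnd ℂ) (y' 0))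
    (h : ip2 (tq x' y') M = 0) :
    x 0 * y 0 * M 1 1 + x 1 * y 1 * M 0 0 - x 0 * y 1 * M 1 0 - x 1 * y 0 * M 0 1 = 0 := by
  simp only [ip2, tq, Fin.sum_univ_two, map_mul] at h
  rw [hx0, hx1, hy0, hy1]
  linear_combination D * E * h

/-- Two matrices in the span of two product matrices: if the first is invertible, the second
is singular and the polarised determinant vanishes, then the second is zero. -/
lemma pencil (A B : Fin 2 → Fin 2 → ℂ) (F P F' P' : ℂ) (g h G H : Fin 2 → ℂ)
    (hA : ∀ j k, A j k = F * (g j * h k) + P * (G j * H k))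
    (hB : ∀ j k, B j k = F' * (g j * h k) + P' * (G j * H k))
    (dA : A 0 0 * A 1 1 - A 0 1 * A 1 0 ≠ 0)
    (dB : B 0 0 * B 1 1 - B 0 1 * B 1 0 = 0)
    (dP : A 0 0 * B 1 1 + A 1 1 * B 0 0 - A 0 1 * B 1 0 - A 1 0 * B 0 1 = 0) : 
    ∀ j k, B j k = 0 := by
  simp only [hA, hB] at dA dB dP
  obtain ⟨K, hK⟩ : ∃ K, K = (g 0 * G 1 - g 1 * G 0) * (h 0 * H 1 - h 1 * H 0) := ⟨_, rfl⟩
  have kA : F * P * K ≠ 0 := by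
    intro h0; apply dA; rw [hK] at h0; linear_combination h0
  have hK0 : K ≠ 0 := right_ne_zero_of_mul kA
  have hF : F ≠ 0 := left_ne_zero_of_mul (left_ne_zero_of_mul kA)
  have hP : P ≠ 0 := right_ne_zero_of_mul (left_ne_zero_of_mul kA)
  have kB : F' * P' = 0 := by
    apply (mul_eq_zero.1 (_ : F' * P' * K = 0)).resolve_right hK0
    rw [hK]; linear_combination dB
  have kP : F * P' + F' * P = 0 := by
    apply (mul_eq_zero.1 (_ : (F * P' + F' * P) * K = 0)).resolve_right hK0
    rw [hK]; linear_combination dP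
  intro j k
  rw [hB]
  rcases mul_eq_zero.1 kB with h0 | h0 <;> simp_all

/-- Proposition 2 (unconditional inseparability of superposition): if
`Ψ = c • α ⊗ Φ + d • α' ⊗ Φ'` with `Φ = s • u₀⊗w₀ + t • u₁⊗w₁` entangled and `Φ'`
a nonzero product state orthogonal to both product terms of the Schmidt
decomposition of `Φ`, then any nontrivial superposition of `Ψ` with a completely
product state is never completely product. -/
theorem unconditional_inseparability_of_superposition
    (α α' u₀ u₁ w₀ w₁ : Fin 2 → ℂ)
    (hαn : ip1 α α = 1) (hα'n : ip1 α' α' = 1) (hαα' : ip1 α α' = 0)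
    (hu₀ : ip1 u₀ u₀ = 1) (hu₁ : ip1 u₁ u₁ = 1) (hu : ip1 u₀ u₁ = 0)
    (hw₀ : ip1 w₀ w₀ = 1) (hw₁ : ip1 w₁ w₁ = 1) (hw : ip1 w₀ w₁ = 0)
    (s t : ℝ) (hs : s ≠ 0) (ht : t ≠ 0) (hst : s ^ 2 + t ^ 2 = 1)
    (Φ' : Fin 2 → Fin 2 → ℂ) (hΦ'0 : Φ' ≠ 0) (hΦ'p : ProdState Φ')
    (ho0 : ip2 (tq u₀ w₀) Φ' = 0) (ho1 : ip2 (tq u₁ w₁) Φ' = 0)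
    (c d : ℝ) (hc : c ≠ 0) (hd : d ≠ 0) (hcd : c ^ 2 + d ^ 2 = 1) :
    ∀ p : Fin 2 → Fin 2 → Fin 2 → ℂ, CompProd3 p →
      ∀ a b : ℂ, a ≠ 0 → b ≠ 0 →
        ¬ CompProd3 (a • ((c : ℂ) • tqq α ((s : ℂ) • tq u₀ w₀ + (t : ℂ) • tq u₁ w₁)
            + (d : ℂ) • tqq α' Φ') + b • p) := by
  rintro p ⟨f₁, g₁, h₁, hp⟩ a b ha hb ⟨f, g, h, hq⟩
  obtain ⟨D, hD, hDd, a1, a2, a3, a4⟩ := onb_det u₀ u₁ hu₀ hu₁ hu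
  obtain ⟨E, hE, hEd, b1, b2, b3, b4⟩ := onb_det w₀ w₁ hw₀ hw₁ hw
  have p0 := polar_zero u₀ w₀ u₁ w₁ D E Φ' a1 a2 b1 b2 ho1
  have p1 := polar_zero u₁ w₁ u₀ w₀ (-D) (-E) Φ' (by rw [a3]) (by rw [a4]; ring)
    (by rw [b3]) (by rw [b4]; ring) ho0
  have hα'α : (starRingEnd ℂ) (ip1 α α') = 0 := by rw [hαα']; simp
  simp only [ip1, Fin.sum_univ_two, map_add, map_mul, Complex.conj_conj]
    at hαn hα'n hαα' hα'α
  obtain ⟨φ, γ, hφ⟩ := hΦ'p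
  have hs' : (s : ℂ) ≠ 0 := by exact_mod_cast hs
  have ht' : (t : ℂ) ≠ 0 := by exact_mod_cast ht
  have hc' : (c : ℂ) ≠ 0 := by exact_mod_cast hc
  have hd' : (d : ℂ) ≠ 0 := by exact_mod_cast hd
  have hq' : ∀ i j k, a * (c * (α i * (s * (u₀ j * w₀ k) + t * (u₁ j * w₁ k)))
      + d * (α' i * Φ' j k)) + b * (f₁ i * g₁ j * h₁ k) = f i * g j * h k := by
    intro i j k
    rw [← hq i j k, ← hp i j k]
    simp [tqq, tq, mul_add]
  have key := pencil
    (fun j k => a * c * (s * (u₀ j * w₀ k) + t * (u₁ j * w₁ k)))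
    (fun j k => a * d * Φ' j k)
    ((starRingEnd ℂ) (α 0) * f 0 + (starRingEnd ℂ) (α 1) * f 1)
    (-b * ((starRingEnd ℂ) (α 0) * f₁ 0 + (starRingEnd ℂ) (α 1) * f₁ 1))
    ((starRingEnd ℂ) (α' 0) * f 0 + (starRingEnd ℂ) (α' 1) * f 1)
    (-b * ((starRingEnd ℂ) (α' 0) * f₁ 0 + (starRingEnd ℂ) (α' 1) * f₁ 1))
    g h g₁ h₁ ?_ ?_ ?_ ?_ ?_
  · apply hΦ'0
    funext j k
    simpa [ha, hd'] using key j k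
  · intro j k
    linear_combination (starRingEnd ℂ) (α 0) * hq' 0 j k + (starRingEnd ℂ) (α 1) * hq' 1 j k
      - a * c * (s * (u₀ j * w₀ k) + t * (u₁ j * w₁ k)) * hαn - a * d * Φ' j k * hαα'
  · intro j k
    linear_combination (starRingEnd ℂ) (α' 0) * hq' 0 j k + (starRingEnd ℂ) (α' 1) * hq' 1 j k
      - a * c * (s * (u₀ j * w₀ k) + t * (u₁ j * w₁ k)) * hα'α - a * d * Φ' j k * hα'n
  · have hne : (a * c) ^ 2 * (s * t) * (D * E) ≠ 0 := by positivity
    intro h0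
    apply hne
    rw [hDd, hEd]
    linear_combination h0
  · simp only [hφ]; ring
  · linear_combination a ^ 2 * c * d * s * p0 + a ^ 2 * c * d * t * p1
end

section
/- Let (u₀, u₁) and (w₀, w₁) be orthonormal bases of ℂ², let s, t be nonzero real numbers, and set Φ = s • (u₀ ⊗ w₀) + t • (u₁ ⊗ w₁). Let Φ' be a nonzero two-qubit product state with ⟨u₀ ⊗ w₀, Φ'⟩ = 0 and ⟨u₁ ⊗ w₁, Φ'⟩ = 0. Then for all complex numbers u, v with u ≠ 0, the two-qubit state u • Φ + v • Φ' is entangled (nonzero and not a product state). -/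
theorem ip2_tq_of_prod (x y f g : Fin 2 → ℂ) (w : Fin 2 → Fin 2 → ℂ)
    (h : ∀ j k, w j k = f j * g k) : ip2 (tq x y) w = ip1 x f * ip1 y g := by
  simp only [ip2, ip1, tq, Fin.sum_univ_two, h, map_mul]
  ring

theorem ip1_symm_zero (x y : Fin 2 → ℂ) (h : ip1 x y = 0) : ip1 y x = 0 := by
  have h2 := congrArg (starRingEnd ℂ) h
  simp only [ip1, Fin.sum_univ_two, map_mul, map_add, Complex.conj_conj, map_zero] at h2 ⊢
  rw [← h2]
  ring

theorem ip2_lin (z a b c : Fin 2 → Fin 2 → ℂ) (u s t v : ℂ) :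
    ip2 z (u • (s • a + t • b) + v • c)
      = u * (s * ip2 z a + t * ip2 z b) + v * ip2 z c := by
  simp only [ip2, Fin.sum_univ_two, Pi.add_apply, Pi.smul_apply, smul_eq_mul]
  ring

/-- Any nontrivial linear combination `u • Φ + v • Φ'` of a two-qubit entangled state
`Φ = s • u₀⊗w₀ + t • u₁⊗w₁` and a nonzero product state `Φ'` orthogonal to both
product terms of the Schmidt decomposition of `Φ` is entangled (here `u ≠ 0`). -/
theorem lin_comb_entangled
    (u₀ u₁ w₀ w₁ : Fin 2 → ℂ)
    (hu₀ : ip1 u₀ u₀ = 1) (hu₁ : ip1 u₁ u₁ = 1) (hu : ip1 u₀ u₁ = 0)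
    (hw₀ : ip1 w₀ w₀ = 1) (hw₁ : ip1 w₁ w₁ = 1) (hw : ip1 w₀ w₁ = 0)
    (s t : ℝ) (hs : s ≠ 0) (ht : t ≠ 0)
    (Φ' : Fin 2 → Fin 2 → ℂ) (hΦ'0 : Φ' ≠ 0) (hΦ'p : ProdState Φ')
    (ho0 : ip2 (tq u₀ w₀) Φ' = 0) (ho1 : ip2 (tq u₁ w₁) Φ' = 0) :
    ∀ u v : ℂ, u ≠ 0 →
      Entangled2 (u • ((s : ℂ) • tq u₀ w₀ + (t : ℂ) • tq u₁ w₁) + v • Φ') := by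
  intro u v hu0
  have key : ¬ ProdState (u • ((s : ℂ) • tq u₀ w₀ + (t : ℂ) • tq u₁ w₁) + v • Φ') := by
    rintro ⟨f, g, hfg⟩
    obtain ⟨p, q, hpq⟩ := hΦ'p
    have hu' := ip1_symm_zero _ _ hu
    have hw' := ip1_symm_zero _ _ hw
    have e (x y a b : Fin 2 → ℂ) : ip2 (tq x y) (tq a b) = ip1 x a * ip1 y b :=
      ip2_tq_of_prod x y a b _ (fun _ _ => rfl)
    have h (x y : Fin 2 → ℂ) := ip2_tq_of_prod x y f g _ hfg
    have hp (x y : Fin 2 → ℂ) := ip2_tq_of_prod x y p q _ hpq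
    simp only [ip2_lin, e, hp] at h
    rw [hp] at ho0 ho1
    have h00 := h u₀ w₀
    have h01 := h u₀ w₁
    have h10 := h u₁ w₀
    have h11 := h u₁ w₁
    simp only [hu₀, hu₁, hu, hw₀, hw₁, hw, hu', hw', ho0, ho1, mul_zero, zero_mul,
      mul_one, add_zero, zero_add] at h00 h01 h10 h11
    have hz : (u * s) * (u * t) = 0 := by
      rw [h00, h11]
      calc _ = (ip1 u₀ f * ip1 w₁ g) * (ip1 u₁ f * ip1 w₀ g) := by ring
        _ = v ^ 2 * (ip1 u₀ p * ip1 w₀ q) * (ip1 u₁ p * ip1 w₁ q) := by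
          rw [← h01, ← h10]; ring
        _ = 0 := by rw [ho0]; ring
    have hs' : (s : ℂ) ≠ 0 := by exact_mod_cast hs
    have ht' : (t : ℂ) ≠ 0 := by exact_mod_cast ht
    exact mul_ne_zero (mul_ne_zero hu0 hs') (mul_ne_zero hu0 ht') hz
  refine ⟨fun h0 => key ?_, key⟩
  rw [h0]
  exact ⟨0, 0, by simp⟩
end

section
/- Let α, α' : Fin 2 → ℂ be orthonormal, let Φ and Φ' be two-qubit entangled states with ⟨Φ, Φ'⟩ = 0, let c, d be nonzero real numbers with c² + d² = 1, and set Ψ = c • (α ⊗ Φ) + d • (α' ⊗ Φ'). Then for all β, γ : Fin 2 → ℂ and all nonzero complex numbers a, b, neither a • Ψ + b • (α ⊗ (β ⊗ γ)) nor a • Ψ + b • (α' ⊗ (β ⊗ γ)) is completely product. -/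
/-- Cases (i) and (ii) of Proposition 3: if both `Φ` and `Φ'` are orthogonal two-qubit
entangled states and `Ψ = c • α ⊗ Φ + d • α' ⊗ Φ'`, then superposing `Ψ` with a
completely product state of the form `α ⊗ β ⊗ γ` or `α' ⊗ β ⊗ γ` never yields a
completely product state. -/
theorem superposition_with_aligned_product_not_completely_product
    (α α' : Fin 2 → ℂ)
    (hαn : ip1 α α = 1) (hα'n : ip1 α' α' = 1) (hαα' : ip1 α α' = 0)
    (Φ Φ' : Fin 2 → Fin 2 → ℂ)
    (hΦ : Entangled2 Φ) (hΦ' : Entangled2 Φ') (hΦΦ' : ip2 Φ Φ' = 0)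
    (c d : ℝ) (hc : c ≠ 0) (hd : d ≠ 0) (hcd : c ^ 2 + d ^ 2 = 1) :
    ∀ β γ : Fin 2 → ℂ, ∀ a b : ℂ, a ≠ 0 → b ≠ 0 →
      ¬ CompProd3 (a • ((c : ℂ) • tqq α Φ + (d : ℂ) • tqq α' Φ')
          + b • tqq α (tq β γ)) ∧
      ¬ CompProd3 (a • ((c : ℂ) • tqq α Φ + (d : ℂ) • tqq α' Φ')
          + b • tqq α' (tq β γ)) := by
  have hα'α : ip1 α' α = 0 := by
    have h := congrArg (starRingEnd ℂ) hαα'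
    simp only [ip1, Fin.sum_univ_two, map_add, map_mul, Complex.conj_conj, map_zero] at h ⊢
    linear_combination h
  have hc' : (c : ℂ) ≠ 0 := by exact_mod_cast hc
  have hd' : (d : ℂ) ≠ 0 := by exact_mod_cast hd
  intro β γ a b ha hb
  simp only [ip1, Fin.sum_univ_two] at hαn hα'n hαα' hα'α
  constructor
  · -- contract the first factor with the conjugate of the second basis vector
    rintro ⟨f, g, h, H⟩
    refine hΦ'.2 ⟨fun j => (a * d)⁻¹ * ip1 α' f * g j, h, fun j k => ?_⟩
    have h0 := H 0 j k
    have h1 := H 1 j k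
    simp only [Pi.add_apply, Pi.smul_apply, smul_eq_mul, tqq, tq] at h0 h1
    have key : (a * d) * Φ' j k = ip1 α' f * g j * h k := by
      simp only [ip1, Fin.sum_univ_two]
      linear_combination (starRingEnd ℂ) (α' 0) * h0 + (starRingEnd ℂ) (α' 1) * h1
        - (a * d * Φ' j k) * hα'n - (a * c * Φ j k + b * (β j * γ k)) * hα'α
    have had : a * (d : ℂ) ≠ 0 := mul_ne_zero ha hd'
    rw [mul_assoc, mul_assoc, ← mul_assoc (ip1 α' f), ← key, inv_mul_cancel_left₀ had]
  · -- contract the first factor with the conjugate of the first basis vector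
    rintro ⟨f, g, h, H⟩
    refine hΦ.2 ⟨fun j => (a * c)⁻¹ * ip1 α f * g j, h, fun j k => ?_⟩
    have h0 := H 0 j k
    have h1 := H 1 j k
    simp only [Pi.add_apply, Pi.smul_apply, smul_eq_mul, tqq, tq] at h0 h1
    have key : (a * c) * Φ j k = ip1 α f * g j * h k := by
      simp only [ip1, Fin.sum_univ_two]
      linear_combination (starRingEnd ℂ) (α 0) * h0 + (starRingEnd ℂ) (α 1) * h1
        - (a * c * Φ j k) * hαn - (a * d * Φ' j k + b * (β j * γ k)) * hαα'
    have hac : a * (c : ℂ) ≠ 0 := mul_ne_zero ha hc'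
    rw [mul_assoc, mul_assoc, ← mul_assoc (ip1 α f), ← key, inv_mul_cancel_left₀ hac]
end

section
/- There exist orthonormal vectors α, α' : Fin 2 → ℂ, two-qubit entangled states Φ and Φ' with ⟨Φ, Φ'⟩ = 0, nonzero real numbers c, d with c² + d² = 1, a completely product three-qubit state p, and nonzero complex numbers a, b, such that a • (c • (α ⊗ Φ) + d • (α' ⊗ Φ')) + b • p is completely product. (Thus when both Schmidt components are entangled, a nontrivial superposition with a suitable completely product state can yield a completely product state.) -/
/-- Case (iii) of Proposition 3: there exist a Schmidt-form three-qubit state with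
both components `Φ`, `Φ'` entangled and orthogonal, and a completely product state
whose nontrivial superposition with it is completely product. -/
theorem exists_both_entangled_superposition_completely_product :
    ∃ (α α' : Fin 2 → ℂ) (Φ Φ' : Fin 2 → Fin 2 → ℂ) (c d : ℝ)
      (p : Fin 2 → Fin 2 → Fin 2 → ℂ) (a b : ℂ),
      ip1 α α = 1 ∧ ip1 α' α' = 1 ∧ ip1 α α' = 0 ∧
      Entangled2 Φ ∧ Entangled2 Φ' ∧ ip2 Φ Φ' = 0 ∧
      c ≠ 0 ∧ d ≠ 0 ∧ c ^ 2 + d ^ 2 = 1 ∧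
      CompProd3 p ∧ a ≠ 0 ∧ b ≠ 0 ∧
      CompProd3 (a • ((c : ℂ) • tqq α Φ + (d : ℂ) • tqq α' Φ') + b • p) := by
  have ent : ∀ w : Fin 2 → Fin 2 → ℂ, w 0 0 * w 1 1 ≠ w 0 1 * w 1 0 → Entangled2 w := by
    intro w hw
    refine ⟨?_, ?_⟩
    · rintro rfl
      simp at hw
    · rintro ⟨f, g, h⟩
      apply hw
      rw [h, h, h, h]
      ring
  refine ⟨![1, 0], ![0, 1], ![![1, 0], ![0, 1]], ![![1, 0], ![0, -1]], 3 / 5, 4 / 5,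
    fun i j k => (![3 / 5, -4 / 5] : Fin 2 → ℂ) i * (![0, 1] : Fin 2 → ℂ) j
      * (![0, 1] : Fin 2 → ℂ) k, 1, -1, ?_, ?_, ?_, ?_, ?_, ?_, ?_, ?_, ?_, ?_, ?_, ?_, ?_⟩
  · simp [ip1]
  · simp [ip1]
  · simp [ip1]
  · apply ent; simp
  · apply ent; simp
  · simp [ip2]
  · norm_num
  · norm_num
  · norm_num
  · exact ⟨_, _, _, fun _ _ _ => rfl⟩
  · norm_num
  · norm_num
  · refine ⟨![3 / 5, 4 / 5], ![1, 0], ![1, 0], ?_⟩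
    intro i j k
    fin_cases i <;> fin_cases j <;> fin_cases k <;> simp [tqq] <;> ring
end

section
/- Let v : Fin 2 → Fin 2 → Fin 2 → ℂ be a nonzero three-qubit state that is product across at least one bipartition, i.e., there exist f : Fin 2 → ℂ and w : Fin 2 → Fin 2 → ℂ such that (v i j k = f i * w j k for all i, j, k) or (v i j k = f j * w i k for all i, j, k) or (v i j k = f k * w i j for all i, j, k). Then there exist a nonzero completely product three-qubit state p and nonzero complex numbers a, b such that a • v + b • p is completely product. -/
/-- A nonzero three-qubit state that is product across at least one bipartition can
always be nontrivially superposed with a suitable nonzero completely product state to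
yield a completely product state. -/
theorem biseparable_superposition_can_be_completely_product
    (v : Fin 2 → Fin 2 → Fin 2 → ℂ) (hv : v ≠ 0)
    (hbisep :
      (∃ (f : Fin 2 → ℂ) (w : Fin 2 → Fin 2 → ℂ), ∀ i j k, v i j k = f i * w j k) ∨
      (∃ (f : Fin 2 → ℂ) (w : Fin 2 → Fin 2 → ℂ), ∀ i j k, v i j k = f j * w i k) ∨
      (∃ (f : Fin 2 → ℂ) (w : Fin 2 → Fin 2 → ℂ), ∀ i j k, v i j k = f k * w i j)) :
    ∃ (p : Fin 2 → Fin 2 → Fin 2 → ℂ) (a b : ℂ),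
      p ≠ 0 ∧ CompProd3 p ∧ a ≠ 0 ∧ b ≠ 0 ∧ CompProd3 (a • v + b • p) := by
  have hne : ∃ i j k, v i j k ≠ 0 := by
    by_contra hcon
    push Not at hcon
    exact hv (by funext i j k; exact hcon i j k)
  obtain ⟨i₀, j₀, k₀, h₀⟩ := hne
  have two : ∀ r j : Fin 2, j ≠ r → j = 1 - r := by decide
  rcases hbisep with ⟨f, w, h⟩ | ⟨f, w, h⟩ | ⟨f, w, h⟩
  -- split the two-qubit factor into the row through a nonzero entry and the other row
  · refine ⟨fun i j k => f i * (if j = j₀ then 1 else 0) * w j₀ k, 1, -1, ?_, ⟨_, _, _, fun _ _ _ => rfl⟩,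
      one_ne_zero, neg_ne_zero.mpr one_ne_zero,
      f, fun j => if j = j₀ then 0 else 1, w (1 - j₀), ?_⟩
    · intro hp
      apply h₀
      have := congrFun (congrFun (congrFun hp i₀) j₀) k₀
      simpa [h] using this
    · intro i j k
      by_cases hj : j = j₀
      · simp [h, hj]
      · simp [h, hj, ← two j₀ j hj]
  · refine ⟨fun i j k => (if i = i₀ then 1 else 0) * f j * w i₀ k, 1, -1, ?_, ⟨_, _, _, fun _ _ _ => rfl⟩,
      one_ne_zero, neg_ne_zero.mpr one_ne_zero,
      fun i => if i = i₀ then 0 else 1, f, w (1 - i₀), ?_⟩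
    · intro hp
      apply h₀
      have := congrFun (congrFun (congrFun hp i₀) j₀) k₀
      simpa [h] using this
    · intro i j k
      by_cases hi : i = i₀
      · simp [h, hi]
      · simp [h, hi, ← two i₀ i hi]
  · refine ⟨fun i j k => (if i = i₀ then 1 else 0) * w i₀ j * f k, 1, -1, ?_, ⟨_, _, _, fun _ _ _ => rfl⟩,
      one_ne_zero, neg_ne_zero.mpr one_ne_zero,
      fun i => if i = i₀ then 0 else 1, w (1 - i₀), f, ?_⟩
    · intro hp
      apply h₀
      have := congrFun (congrFun (congrFun hp i₀) j₀) k₀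
      simp only [if_true, one_mul, Pi.zero_apply] at this
      rw [h, mul_comm]
      exact this
    · intro i j k
      by_cases hi : i = i₀
      · simp [h, hi, mul_comm]
      · simp [h, hi, ← two i₀ i hi, mul_comm]
end

section
/- For every natural number n ≥ 3 and every d : Fin n → ℕ with 2 ≤ d i for all i, there exists a state v : (∀ i : Fin n, Fin (d i)) → ℂ which is nonzero and not completely product, such that for every completely product state p : (∀ i : Fin n, Fin (d i)) → ℂ and all nonzero complex numbers a, b, the state a • v + b • p is not completely product. (Thus every multipartite Hilbert space contains at least one unconditionally superposition-robust entangled state.) -/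
/-- The three-qubit W tensor is not a sum of two product tensors. -/
lemma w_rank_aux_s11 (F0 F1 F2 G0 G1 G2 : Bool → ℂ)
    (h : ∀ a b c : Bool, (if a.toNat + b.toNat + c.toNat = 1 then (1 : ℂ) else 0)
      = F0 a * F1 b * F2 c + G0 a * G1 b * G2 c) : False := by
  have h000 := h false false false
  have h001 := h false false true
  have h010 := h false true false
  have h011 := h false true true
  have h100 := h true false false
  have h101 := h true false true
  have h110 := h true true false
  have h111 := h true true true
  simp at h000 h001 h010 h011 h100 h101 h110 h111
  clear h
  generalize F0 false = p0 at *
  generalize F0 true = p1 at *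
  generalize F1 false = q0 at *
  generalize F1 true = q1 at *
  generalize F2 false = r0 at *
  generalize F2 true = r1 at *
  generalize G0 false = s0 at *
  generalize G0 true = s1 at *
  generalize G1 false = t0 at *
  generalize G1 true = t1 at *
  generalize G2 false = u0 at *
  generalize G2 true = u1 at *
  set D := (p0 * s1 - p1 * s0) * (q0 * t1 - q1 * t0) with hD
  have e0 : r0 * u0 * D = -1 := by
    have : r0 * u0 * D = (p0 * q0 * r0 + s0 * t0 * u0) * (p1 * q1 * r0 + s1 * t1 * u0)
      - (p0 * q1 * r0 + s0 * t1 * u0) * (p1 * q0 * r0 + s1 * t0 * u0) := by rw [hD]; ring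
    rw [this, ← h010, ← h100, ← h000, ← h110]; ring
  have e1 : r1 * u1 * D = 0 := by
    have : r1 * u1 * D = (p0 * q0 * r1 + s0 * t0 * u1) * (p1 * q1 * r1 + s1 * t1 * u1)
      - (p0 * q1 * r1 + s0 * t1 * u1) * (p1 * q0 * r1 + s1 * t0 * u1) := by rw [hD]; ring
    rw [this, ← h011, ← h101, ← h001, ← h111]; ring
  have e2 : (r0 * u1 + r1 * u0) * D = 0 := by
    have : (r0 * u1 + r1 * u0) * D =
      (p0 * q0 * r0 + s0 * t0 * u0) * (p1 * q1 * r1 + s1 * t1 * u1)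
      + (p0 * q0 * r1 + s0 * t0 * u1) * (p1 * q1 * r0 + s1 * t1 * u0)
      - (p0 * q1 * r0 + s0 * t1 * u0) * (p1 * q0 * r1 + s1 * t0 * u1)
      - (p0 * q1 * r1 + s0 * t1 * u1) * (p1 * q0 * r0 + s1 * t0 * u0) := by rw [hD]; ring
    rw [this, ← h000, ← h111, ← h001, ← h110, ← h010, ← h101, ← h011, ← h100]; ring
  clear_value D
  have hD0 : D ≠ 0 := by rintro rfl; simp at e0
  have hr0 : r0 ≠ 0 := by rintro rfl; simp at e0
  have hu0 : u0 ≠ 0 := by rintro rfl; simp at e0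
  have e1' : r1 * u1 = 0 := (mul_eq_zero.mp e1).resolve_right hD0
  have e2' := (mul_eq_zero.mp e2).resolve_right hD0
  rcases mul_eq_zero.mp e1' with h | h
  · subst h
    have : u1 = 0 := by simpa [hr0] using e2'
    subst this
    simp at h001
  · subst h
    have : r1 = 0 := by simpa [hu0] using e2'
    subst this
    simp at h001

/-- The W tensor on the first three parties (constant in the others) is not a sum of two
scaled product tensors. -/
lemma w_rank_main (m : ℕ) (d : Fin (m + 3) → ℕ) (hd : ∀ i, 2 ≤ d i)
    (f g : ∀ i, Fin (d i) → ℂ) (s t : ℂ)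
    (h : ∀ x : (∀ i, Fin (d i)),
      (if (x 0).val + (x 1).val + (x 2).val = 1 then (1 : ℂ) else 0)
        = s * ∏ i, f i (x i) + t * ∏ i, g i (x i)) : False := by
  let z : ∀ i, Bool → Fin (d i) := fun i e => ⟨e.toNat, by
    have := hd i
    cases e <;> simp <;> omega⟩
  apply w_rank_aux_s11 (fun a => f 0 (z 0 a)) (fun a => f 1 (z 1 a))
    (fun a => f 2 (z 2 a) * (s * ∏ i : Fin m, f i.succ.succ.succ (z _ false)))
    (fun a => g 0 (z 0 a)) (fun a => g 1 (z 1 a))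
    (fun a => g 2 (z 2 a) * (t * ∏ i : Fin m, g i.succ.succ.succ (z _ false)))
  intro a b c
  let e : Fin (m + 3) → Bool := Fin.cons a (Fin.cons b (Fin.cons c fun _ => false))
  have key : ∀ k : (∀ i, Fin (d i) → ℂ), ∏ i, k i (z i (e i)) =
      k 0 (z 0 a) * (k 1 (z 1 b) * (k 2 (z 2 c) *
        ∏ i : Fin m, k i.succ.succ.succ (z _ false))) := by
    intro k
    rw [Fin.prod_univ_succ, Fin.prod_univ_succ, Fin.prod_univ_succ]
    rfl
  have := h (fun i => z i (e i))
  rw [key, key] at this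
  refine Eq.trans ?_ (this.trans (by ring))
  rfl

/-- Theorem 1: every multipartite Hilbert space (at least 3 parties, each local
dimension at least 2) contains at least one entangled state whose nontrivial
superposition with an arbitrary completely product state is never completely
product, i.e. an unconditionally superposition-robust entangled state. -/
theorem exists_unconditionally_superposition_robust_state
    (n : ℕ) (hn : 3 ≤ n) (d : Fin n → ℕ) (hd : ∀ i, 2 ≤ d i) :
    ∃ v : (∀ i : Fin n, Fin (d i)) → ℂ,
      v ≠ 0 ∧ ¬ CompletelyProduct v ∧
      ∀ p : (∀ i : Fin n, Fin (d i)) → ℂ, CompletelyProduct p →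
        ∀ a b : ℂ, a ≠ 0 → b ≠ 0 → ¬ CompletelyProduct (a • v + b • p) := by
  obtain ⟨m, rfl⟩ : ∃ m, n = m + 3 := ⟨n - 3, by omega⟩
  refine ⟨fun x => if (x 0).val + (x 1).val + (x 2).val = 1 then (1 : ℂ) else 0, ?_, ?_, ?_⟩
  · intro h
    refine w_rank_main m d hd (fun _ _ => 0) (fun _ _ => 0) 0 0 fun x => ?_
    simpa using congrFun h x
  · rintro ⟨f, hf⟩
    refine w_rank_main m d hd f f 1 0 fun x => ?_
    simpa using hf x
  · rintro p ⟨g, hg⟩ a b ha hb ⟨f, hf⟩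
    refine w_rank_main m d hd f g a⁻¹ (-(a⁻¹ * b)) fun x => ?_
    have := hf x
    simp only [Pi.add_apply, Pi.smul_apply, smul_eq_mul] at this
    rw [← this, ← hg]
    field_simp
    ring
end

section
/- Let d ≥ 2 and let M : Fin 2 → Fin d → ℂ be the coefficient matrix of an entangled qubit–qudit pure state, i.e., M is nonzero and there exist no f : Fin 2 → ℂ, g : Fin d → ℂ with M i j = f i * g j for all i, j. Then there exist a nonzero product state P : Fin 2 → Fin d → ℂ (i.e., P i j = f i * g j for some f, g) and nonzero complex numbers a, b such that a • M + b • P is a nonzero product state. (Thus no state of ℂ² ⊗ ℂ^d is unconditionally superposition-robust, in sharp contrast with multipartite systems.) -/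
/-- No qubit–qudit entangled pure state is unconditionally superposition-robust:
for any entangled `M : Fin 2 → Fin d → ℂ` there are a nonzero product state `P` and
nonzero coefficients `a`, `b` such that `a • M + b • P` is a nonzero product state. -/
theorem qubit_qudit_not_superposition_robust
    (d : ℕ) (hd : 2 ≤ d) (M : Fin 2 → Fin d → ℂ) (hM0 : M ≠ 0)
    (hMent : ¬ ∃ (f : Fin 2 → ℂ) (g : Fin d → ℂ), ∀ i j, M i j = f i * g j) :
    ∃ (P : Fin 2 → Fin d → ℂ) (a b : ℂ),
      P ≠ 0 ∧ (∃ (f : Fin 2 → ℂ) (g : Fin d → ℂ), ∀ i j, P i j = f i * g j) ∧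
      a ≠ 0 ∧ b ≠ 0 ∧ a • M + b • P ≠ 0 ∧
      (∃ (f : Fin 2 → ℂ) (g : Fin d → ℂ), ∀ i j, (a • M + b • P) i j = f i * g j) := by
  have key : ∀ i j, ((1 : ℂ) • M + (-1 : ℂ) • (fun i j => (![1, 0] : Fin 2 → ℂ) i * M 0 j)) i j
      = (![0, 1] : Fin 2 → ℂ) i * M 1 j := by
    intro i j
    fin_cases i <;> simp
  refine ⟨fun i j => (![1, 0] : Fin 2 → ℂ) i * M 0 j, 1, -1, ?_, ⟨_, _, fun _ _ => rfl⟩,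
    one_ne_zero, by norm_num, ?_, ⟨_, _, key⟩⟩
  · intro h
    refine hMent ⟨![0, 1], M 1, fun i j => ?_⟩
    rw [← key, h]
    simp
  · intro h
    refine hMent ⟨![1, 0], M 0, fun i j => ?_⟩
    have h2 := congrFun (congrFun h i) j
    simp only [Pi.add_apply, Pi.smul_apply, Pi.zero_apply, smul_eq_mul] at h2
    linear_combination h2
end

section
/- There exist orthonormal vectors α, α' : Fin 2 → ℂ, a two-qubit entangled state Φ, a nonzero two-qubit product state Φ' with ⟨Φ, Φ'⟩ = 0, nonzero real numbers c, d with c² + d² = 1, a two-qubit entangled state χ which is not a scalar multiple of Φ, and nonzero complex numbers a, b, such that a • (c • (α ⊗ Φ) + d • (α' ⊗ Φ')) + b • (α ⊗ χ) is completely product. (Thus superposition with a bi-separable state whose entangled factor differs from Φ can still yield a completely product state.) -/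
/-- Proposition 4: there exist a Schmidt-form three-qubit state `Ψ` (with `Φ`
entangled and `Φ'` a nonzero product state orthogonal to `Φ`) and a bi-separable
state `α ⊗ χ`, with `χ` entangled and not proportional to `Φ`, whose nontrivial
superposition with `Ψ` is completely product. -/
theorem exists_biseparable_superposition_completely_product :
    ∃ (α α' : Fin 2 → ℂ) (Φ Φ' χ : Fin 2 → Fin 2 → ℂ) (c d : ℝ) (a b : ℂ),
      ip1 α α = 1 ∧ ip1 α' α' = 1 ∧ ip1 α α' = 0 ∧
      Entangled2 Φ ∧ Φ' ≠ 0 ∧ ProdState Φ' ∧ ip2 Φ Φ' = 0 ∧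
      c ≠ 0 ∧ d ≠ 0 ∧ c ^ 2 + d ^ 2 = 1 ∧
      Entangled2 χ ∧ (¬ ∃ z : ℂ, χ = z • Φ) ∧ a ≠ 0 ∧ b ≠ 0 ∧
      CompProd3 (a • ((c : ℂ) • tqq α Φ + (d : ℂ) • tqq α' Φ') + b • tqq α χ) := by
  have ent : ∀ w : Fin 2 → Fin 2 → ℂ, w 0 0 * w 1 1 - w 0 1 * w 1 0 ≠ 0 → Entangled2 w := by
    intro w hw
    refine ⟨?_, ?_⟩
    · rintro rfl
      simp at hw
    · rintro ⟨f, g, h⟩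
      apply hw
      rw [h, h, h, h]
      ring
  refine ⟨![1, 0], ![0, 1], ![![0, 1], ![1, 0]], ![![1, 0], ![0, 0]],
    ![![1, -3], ![-3, 0]], 3 / 5, 4 / 5, 5, 1, ?_, ?_, ?_, ?_, ?_, ?_, ?_, ?_, ?_, ?_, ?_, ?_,
    ?_, ?_, ?_⟩
  · simp [ip1]
  · simp [ip1]
  · simp [ip1]
  · apply ent
    simp
  · intro h
    have := congrFun (congrFun h 0) 0
    simp at this
  · refine ⟨![1, 0], ![1, 0], ?_⟩
    intro j k
    fin_cases j <;> fin_cases k <;> simp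
  · simp [ip2]
  · norm_num
  · norm_num
  · norm_num
  · apply ent
    simp
  · rintro ⟨z, h⟩
    have := congrFun (congrFun h 0) 0
    simp at this
  · norm_num
  · norm_num
  · refine ⟨![1, 4], ![1, 0], ![1, 0], ?_⟩
    intro i j k
    fin_cases i <;> fin_cases j <;> fin_cases k <;> simp [tqq] <;> norm_num
end

section
/- Let ω = exp(2πi/3) and define the six three-qubit W-UEB states (with |ijk⟩ denoting the standard basis tensor): ψ₁ = (1/√3)(|001⟩+|010⟩+|100⟩), ψ₂ = (1/√3)(|001⟩+ω|010⟩+ω²|100⟩), ψ₃ = (1/√3)(|001⟩+ω²|010⟩+ω|100⟩), ψ₄ = (1/√3)(|000⟩+|101⟩+|110⟩), ψ₅ = (1/√3)(|000⟩+ω|101⟩+ω²|110⟩), ψ₆ = (1/√3)(|000⟩+ω²|101⟩+ω|110⟩). Then for each m ∈ {1,…,6}, every completely product three-qubit state p, and all nonzero complex numbers a, b, the state a • ψₘ + b • p is not completely product. -/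
/-- The standard basis ket `|i j k⟩` of the three-qubit space. -/
def ket (i j k : Fin 2) : Fin 2 → Fin 2 → Fin 2 → ℂ :=
  fun i' j' k' => if i' = i ∧ j' = j ∧ k' = k then 1 else 0

/-- The cube root of unity `ω = exp(2πi/3)`. -/
noncomputable def ω : ℂ := Complex.exp (2 * Real.pi * Complex.I / 3)

/-- The six states of the three-qubit W-type unextendible entangled basis. -/
noncomputable def ψW : Fin 6 → (Fin 2 → Fin 2 → Fin 2 → ℂ) :=
  ![((Real.sqrt 3 : ℂ))⁻¹ • (ket 0 0 1 + ket 0 1 0 + ket 1 0 0),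
    ((Real.sqrt 3 : ℂ))⁻¹ • (ket 0 0 1 + ω • ket 0 1 0 + ω ^ 2 • ket 1 0 0),
    ((Real.sqrt 3 : ℂ))⁻¹ • (ket 0 0 1 + ω ^ 2 • ket 0 1 0 + ω • ket 1 0 0),
    ((Real.sqrt 3 : ℂ))⁻¹ • (ket 0 0 0 + ket 1 0 1 + ket 1 1 0),
    ((Real.sqrt 3 : ℂ))⁻¹ • (ket 0 0 0 + ω • ket 1 0 1 + ω ^ 2 • ket 1 1 0),
    ((Real.sqrt 3 : ℂ))⁻¹ • (ket 0 0 0 + ω ^ 2 • ket 1 0 1 + ω • ket 1 1 0)]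

/-- A W-type tensor with nonzero coefficients is not a sum of two product tensors. -/
theorem w_core (f0 f1 g0 g1 h0 h1 F0 F1 G0 G1 H0 H1 x y z : ℂ)
    (hx : x ≠ 0) (hy : y ≠ 0) (hz : z ≠ 0)
    (e000 : f0 * g0 * h0 - F0 * G0 * H0 = 0)
    (e001 : f0 * g0 * h1 - F0 * G0 * H1 = x)
    (e010 : f0 * g1 * h0 - F0 * G1 * H0 = y)
    (e011 : f0 * g1 * h1 - F0 * G1 * H1 = 0)
    (e100 : f1 * g0 * h0 - F1 * G0 * H0 = z)
    (e101 : f1 * g0 * h1 - F1 * G0 * H1 = 0)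
    (e110 : f1 * g1 * h0 - F1 * G1 * H0 = 0)
    (e111 : f1 * g1 * h1 - F1 * G1 * H1 = 0) : False := by
  obtain ⟨D, hD⟩ : ∃ D, D = (g0 * G1 - g1 * G0) * (h0 * H1 - h1 * H0) := ⟨_, rfl⟩
  have d0 : f0 * F0 * D = x * y := by
    have : (f0 * g0 * h0 - F0 * G0 * H0) * (f0 * g1 * h1 - F0 * G1 * H1)
      - (f0 * g0 * h1 - F0 * G0 * H1) * (f0 * g1 * h0 - F0 * G1 * H0)
      = - (f0 * F0 * D) := by rw [hD]; ring
    rw [e000, e001, e010, e011] at this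
    linear_combination this
  have d1 : f1 * F1 * D = 0 := by
    have : (f1 * g0 * h0 - F1 * G0 * H0) * (f1 * g1 * h1 - F1 * G1 * H1)
      - (f1 * g0 * h1 - F1 * G0 * H1) * (f1 * g1 * h0 - F1 * G1 * H0)
      = - (f1 * F1 * D) := by rw [hD]; ring
    rw [e100, e101, e110, e111] at this
    linear_combination this
  have dm : (f0 * F1 + f1 * F0) * D = 0 := by
    have : (f0 * g0 * h0 - F0 * G0 * H0) * (f1 * g1 * h1 - F1 * G1 * H1)
      + (f1 * g0 * h0 - F1 * G0 * H0) * (f0 * g1 * h1 - F0 * G1 * H1)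
      - (f0 * g0 * h1 - F0 * G0 * H1) * (f1 * g1 * h0 - F1 * G1 * H0)
      - (f1 * g0 * h1 - F1 * G0 * H1) * (f0 * g1 * h0 - F0 * G1 * H0)
      = - ((f0 * F1 + f1 * F0) * D) := by rw [hD]; ring
    rw [e000, e001, e010, e011, e100, e101, e110, e111] at this
    linear_combination this
  have hne : f0 * F0 * D ≠ 0 := by rw [d0]; exact mul_ne_zero hx hy
  have hD0 : D ≠ 0 := right_ne_zero_of_mul hne
  have hf0 : f0 ≠ 0 := left_ne_zero_of_mul (left_ne_zero_of_mul hne)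
  have hF0 : F0 ≠ 0 := right_ne_zero_of_mul (left_ne_zero_of_mul hne)
  have m1 := (mul_eq_zero.mp d1).resolve_right hD0
  have mm := (mul_eq_zero.mp dm).resolve_right hD0
  rcases mul_eq_zero.mp m1 with h | h
  · have : F1 = 0 := by simpa [h, hf0] using mm
    exact hz (by rw [← e100, h, this]; ring)
  · have : f1 = 0 := by simpa [h, hF0] using mm
    exact hz (by rw [← e100, h, this]; ring)

theorem w_typeA (v p : Fin 2 → Fin 2 → Fin 2 → ℂ) (c x y z a b : ℂ) (ha : a ≠ 0) (hc : c ≠ 0)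
    (hx : x ≠ 0) (hy : y ≠ 0) (hz : z ≠ 0) (hp : CompProd3 p)
    (hv : v = c • (x • ket 0 0 1 + y • ket 0 1 0 + z • ket 1 0 0)) :
    ¬ CompProd3 (a • v + b • p) := by
  rintro ⟨f, g, h, H⟩
  obtain ⟨F, G, K, P⟩ := hp
  subst hv
  have e : ∀ i j k, f i * g j * h k - (b * F i) * G j * K k
      = a * (c * (x * ket 0 0 1 i j k + y * ket 0 1 0 i j k + z * ket 1 0 0 i j k)) := by
    intro i j k
    have := H i j k
    simp only [Pi.add_apply, Pi.smul_apply, smul_eq_mul, P] at this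
    linear_combination -this
  refine w_core (f 0) (f 1) (g 0) (g 1) (h 0) (h 1) (b * F 0) (b * F 1) (G 0) (G 1) (K 0) (K 1)
    (a * (c * x)) (a * (c * y)) (a * (c * z)) (by simp [*]) (by simp [*]) (by simp [*])
    ?_ ?_ ?_ ?_ ?_ ?_ ?_ ?_ <;> rw [e] <;> simp [ket]

theorem w_typeB (v p : Fin 2 → Fin 2 → Fin 2 → ℂ) (c x y z a b : ℂ) (ha : a ≠ 0) (hc : c ≠ 0)
    (hx : x ≠ 0) (hy : y ≠ 0) (hz : z ≠ 0) (hp : CompProd3 p)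
    (hv : v = c • (x • ket 0 0 0 + y • ket 1 0 1 + z • ket 1 1 0)) :
    ¬ CompProd3 (a • v + b • p) := by
  rintro ⟨f, g, h, H⟩
  obtain ⟨F, G, K, P⟩ := hp
  subst hv
  have e : ∀ i j k, f i * g j * h k - (b * F i) * G j * K k
      = a * (c * (x * ket 0 0 0 i j k + y * ket 1 0 1 i j k + z * ket 1 1 0 i j k)) := by
    intro i j k
    have := H i j k
    simp only [Pi.add_apply, Pi.smul_apply, smul_eq_mul, P] at this
    linear_combination -this
  refine w_core (f 1) (f 0) (g 0) (g 1) (h 0) (h 1) (b * F 1) (b * F 0) (G 0) (G 1) (K 0) (K 1)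
    (a * (c * y)) (a * (c * z)) (a * (c * x)) (by simp [*]) (by simp [*]) (by simp [*])
    ?_ ?_ ?_ ?_ ?_ ?_ ?_ ?_ <;> rw [e] <;> simp [ket]

/-- Each state of the W-UEB is unconditionally superposition-robust: its nontrivial
superposition with any completely product three-qubit state is never completely
product. -/
theorem wUEB_unconditional_inseparability :
    ∀ m : Fin 6, ∀ p : Fin 2 → Fin 2 → Fin 2 → ℂ, CompProd3 p →
      ∀ a b : ℂ, a ≠ 0 → b ≠ 0 → ¬ CompProd3 (a • ψW m + b • p) := by
  intro m p hp a b ha _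
  have hc : ((Real.sqrt 3 : ℂ))⁻¹ ≠ 0 := by simp
  have h1 : (1 : ℂ) ≠ 0 := one_ne_zero
  have hw : ω ≠ 0 := Complex.exp_ne_zero _
  have hw2 : ω ^ 2 ≠ 0 := pow_ne_zero 2 hw
  fin_cases m
  · exact w_typeA _ p _ 1 1 1 a b ha hc h1 h1 h1 hp (by simp [ψW])
  · exact w_typeA _ p _ 1 ω (ω ^ 2) a b ha hc h1 hw hw2 hp (by simp [ψW])
  · exact w_typeA _ p _ 1 (ω ^ 2) ω a b ha hc h1 hw2 hw hp (by simp [ψW])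
  · exact w_typeB _ p _ 1 1 1 a b ha hc h1 h1 h1 hp (by simp [ψW])
  · exact w_typeB _ p _ 1 ω (ω ^ 2) a b ha hc h1 hw hw2 hp (by simp [ψW])
  · exact w_typeB _ p _ 1 (ω ^ 2) ω a b ha hc h1 hw2 hw hp (by simp [ψW])
end

section
/- Let ω = exp(2πi/3) and let ψ₁,…,ψ₆ be the six three-qubit W-UEB states: ψ₁ = (1/√3)(|001⟩+|010⟩+|100⟩), ψ₂ = (1/√3)(|001⟩+ω|010⟩+ω²|100⟩), ψ₃ = (1/√3)(|001⟩+ω²|010⟩+ω|100⟩), ψ₄ = (1/√3)(|000⟩+|101⟩+|110⟩), ψ₅ = (1/√3)(|000⟩+ω|101⟩+ω²|110⟩), ψ₆ = (1/√3)(|000⟩+ω²|101⟩+ω|110⟩). Then for every m ∈ {1,…,6}, there is no completely product three-qubit state v such that ⟨ψₙ, v⟩ = 0 for all n ≠ m and ⟨ψₘ, v⟩ ≠ 0. (This is the necessary and sufficient condition for unambiguous local identification of ψₘ with nonzero probability; hence no state of the W-UEB is locally unambiguously identifiable.) -/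
theorem omega_rel : ω ^ 2 + ω + 1 = 0 := by
  have h : IsPrimitiveRoot ω 3 := by
    have := Complex.isPrimitiveRoot_exp 3 (by norm_num)
    simpa [ω] using this
  have h1 : ω ≠ 1 := h.ne_one (by norm_num)
  have h3 : ω ^ 3 = 1 := h.pow_eq_one
  have : (ω - 1) * (ω ^ 2 + ω + 1) = 0 := by linear_combination h3
  exact (mul_eq_zero.mp this).resolve_left (sub_ne_zero.mpr h1)

theorem conj_omega_rel :
    (starRingEnd ℂ) ω ^ 2 + (starRingEnd ℂ) ω + 1 = 0 := by
  have := congrArg (starRingEnd ℂ) omega_rel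
  simpa using this

/-- The three Fourier sums of a triple determine it. -/
theorem all_zero (z x y w : ℂ) (hz : z ^ 2 + z + 1 = 0) (h1 : x + y + w = 0)
    (h2 : x + z * y + z ^ 2 * w = 0) (h3 : x + z ^ 2 * y + z * w = 0) :
    x = 0 := by
  have : 3 * x = 0 := by linear_combination h1 + h2 + h3 - (y + w) * hz
  simpa using this

theorem pair_zero (z x y w : ℂ) (hz : z ^ 2 + z + 1 = 0) (hxy : x * y = 0)
    (h : (x + y + w = 0 ∧ x + z * y + z ^ 2 * w = 0) ∨
      (x + y + w = 0 ∧ x + z ^ 2 * y + z * w = 0) ∨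
      (x + z * y + z ^ 2 * w = 0 ∧ x + z ^ 2 * y + z * w = 0)) :
    x = 0 ∧ y = 0 ∧ w = 0 := by
  have z0 : z ≠ 0 := by rintro rfl; norm_num at hz
  have z1 : z ≠ 1 := by rintro rfl; norm_num at hz
  have z2 : z - 1 ≠ 0 := sub_ne_zero.mpr z1
  have z3 : z + 1 ≠ 0 := by
    intro h0
    have : z ^ 2 = 0 := by linear_combination hz - h0
    exact z0 (by simpa using this)
  rcases mul_eq_zero.mp hxy with rfl | rfl <;> grind

theorem ip_vals (v : Fin 2 → Fin 2 → Fin 2 → ℂ) (n : Fin 6) :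
    ip3 (ψW n) v = ((Real.sqrt 3 : ℂ))⁻¹ *
      (![v 0 0 1 + v 0 1 0 + v 1 0 0,
        v 0 0 1 + (starRingEnd ℂ) ω * v 0 1 0 + (starRingEnd ℂ) ω ^ 2 * v 1 0 0,
        v 0 0 1 + (starRingEnd ℂ) ω ^ 2 * v 0 1 0 + (starRingEnd ℂ) ω * v 1 0 0,
        v 0 0 0 + v 1 0 1 + v 1 1 0,
        v 0 0 0 + (starRingEnd ℂ) ω * v 1 0 1 + (starRingEnd ℂ) ω ^ 2 * v 1 1 0,
        v 0 0 0 + (starRingEnd ℂ) ω ^ 2 * v 1 0 1 + (starRingEnd ℂ) ω * v 1 1 0] n) := by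
  fin_cases n <;> simp [ip3, ψW, ket, Fin.sum_univ_two] <;> ring

/-- Theorem 2 for the W-UEB: no state of the W-UEB is locally unambiguously
identifiable, i.e. for each `m` there is no completely product state orthogonal to
all the other W-UEB states but not orthogonal to `ψW m`. -/
theorem wUEB_not_locally_unambiguously_identifiable :
    ∀ m : Fin 6,
      ¬ ∃ v : Fin 2 → Fin 2 → Fin 2 → ℂ, CompProd3 v ∧
        (∀ n : Fin 6, n ≠ m → ip3 (ψW n) v = 0) ∧ ip3 (ψW m) v ≠ 0 := by
  rintro m ⟨v, ⟨f, g, h, hv⟩, h0, hm⟩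
  have hs : ((Real.sqrt 3 : ℂ))⁻¹ ≠ 0 := by simp
  have hz := conj_omega_rel
  simp only [ip_vals, mul_eq_zero, hs, false_or, ne_eq] at h0 hm
  have e0 := h0 0
  have e1 := h0 1
  have e2 := h0 2
  have e3 := h0 3
  have e4 := h0 4
  have e5 := h0 5
  generalize (starRingEnd ℂ) ω = z at *
  have p1 : v 0 0 0 = 0 → v 0 0 1 * v 0 1 0 = 0 := by
    intro h'
    rw [hv] at h' ⊢
    rw [hv]
    linear_combination (f 0 * g 1 * h 1) * h'
  have p2 : v 0 0 1 = 0 → v 0 0 0 * v 1 0 1 = 0 := by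
    intro h'
    rw [hv] at h' ⊢
    rw [hv]
    linear_combination (f 1 * g 0 * h 0) * h'
  have A := all_zero z (v 0 0 1) (v 0 1 0) (v 1 0 0) hz
  have B := all_zero z (v 0 0 0) (v 1 0 1) (v 1 1 0) hz
  have C := pair_zero z (v 0 0 1) (v 0 1 0) (v 1 0 0) hz
  have D := pair_zero z (v 0 0 0) (v 1 0 1) (v 1 1 0) hz
  clear h0 hv
  fin_cases m <;> simp at e0 e1 e2 e3 e4 e5 hm
  · obtain ⟨a, b, c⟩ := C (p1 (B e3 e4 e5)) (Or.inr (Or.inr ⟨e1, e2⟩))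
    simp [a, b, c] at hm
  · obtain ⟨a, b, c⟩ := C (p1 (B e3 e4 e5)) (Or.inr (Or.inl ⟨e0, e2⟩))
    simp [a, b, c] at hm
  · obtain ⟨a, b, c⟩ := C (p1 (B e3 e4 e5)) (Or.inl ⟨e0, e1⟩)
    simp [a, b, c] at hm
  · obtain ⟨a, b, c⟩ := D (p2 (A e0 e1 e2)) (Or.inr (Or.inr ⟨e4, e5⟩))
    simp [a, b, c] at hm
  · obtain ⟨a, b, c⟩ := D (p2 (A e0 e1 e2)) (Or.inr (Or.inl ⟨e3, e5⟩))
    simp [a, b, c] at hm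
  · obtain ⟨a, b, c⟩ := D (p2 (A e0 e1 e2)) (Or.inl ⟨e3, e4⟩)
    simp [a, b, c] at hm
end
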